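/- Let i ≥ 1, L ≥ 1 and nonnegative integers a_1,…,a_i with a_i ≥ a_j for all j ∈ [i] be given, and set K = (i−1)L + Σ_{j=1}^{i} a_j + 1. Consider the coloring of the nodes of the (a_i,…,a_1)_L-bar-ICP that assigns, for each c ∈ [K], color c to the nodes (<c + Σ_{m=1}^{v−1} a_m + (v−1)L>_K, v) for v ∈ [i]. Then for every node (k,t), the number of distinct colors appearing on the closed anti-outneighborhood of (k,t) — the set consisting of (k,t) itself together with all interference nodes of (k,t) — is at most min{ 2(K−(i−1)L) + i − 2 − a_i , K }. -/

import Mathlib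

open Finset

/-- `<m>_n`: the unique element of `{1,…,n}` congruent to `m` modulo `n`. -/
def angMod (m : ℤ) (n : ℕ) : ℕ :=
  if m % (n : ℤ) = 0 then n else (m % (n : ℤ)).toNat

/-- The side-information index set `K_k` of user `k` in the
`(a_i,…,a_1)_L`-bar-ICP, as a set of nodes `(b,t)`. -/
def knownIdx (K i L : ℕ) (a : ℕ → ℕ) (k : ℕ) : Set (ℕ × ℕ) :=
  {p | ∃ t ∈ Finset.Icc 1 i, ∃ v ∈ Finset.Icc 1 (i - 1), ∃ r ∈ Finset.Icc 1 L,
    p.2 = t ∧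
    p.1 = angMod ((k : ℤ) + (∑ j ∈ Finset.Icc 1 v, (a (angMod ((i : ℤ) + (t : ℤ) - (j : ℤ)) i) : ℤ))
        + ((v : ℤ) - 1) * (L : ℤ) + (r : ℤ)) K}

/-- The closed anti-outneighborhood of node `(k,t)`: the node itself together
with all of its interference nodes. -/
def closedAnti (K i L : ℕ) (a : ℕ → ℕ) (k t : ℕ) : Set (ℕ × ℕ) :=
  {p | p.1 ∈ Finset.Icc 1 K ∧ p.2 ∈ Finset.Icc 1 i ∧
    (p = (k, t) ∨ (p.1 ≠ k ∧ p ∉ knownIdx K i L a k))}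


lemma angMod_mem (m : ℤ) (n : ℕ) (hn : 1 ≤ n) : 1 ≤ angMod m n ∧ angMod m n ≤ n := by
  have h1 := Int.emod_nonneg m (show (n : ℤ) ≠ 0 by omega)
  have h2 := Int.emod_lt_of_pos m (show (0 : ℤ) < n by omega)
  unfold angMod
  split_ifs <;> omega

lemma angMod_dvd (m : ℤ) (n : ℕ) (hn : 1 ≤ n) : (n : ℤ) ∣ (angMod m n : ℤ) - m := by
  have h1 := Int.emod_nonneg m (show (n : ℤ) ≠ 0 by omega)
  have h3 := Int.emod_add_mul_ediv m n
  unfold angMod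
  split_ifs with h
  · exact dvd_sub (dvd_refl _) (Int.dvd_of_emod_eq_zero h)
  · rw [Int.toNat_of_nonneg h1]
    refine ⟨-(m / n), ?_⟩
    linarith

lemma angMod_eq (m : ℤ) (n b : ℕ) (hb : 1 ≤ b) (hbn : b ≤ n) (h : (n : ℤ) ∣ (b : ℤ) - m) :
    angMod m n = b := by
  have h1 := angMod_mem m n (by omega)
  have h2 := angMod_dvd m n (by omega)
  have h3 : (n : ℤ) ∣ (angMod m n : ℤ) - b := by
    obtain ⟨q, hq⟩ := h2
    obtain ⟨p, hp⟩ := h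
    exact ⟨q - p, by rw [mul_sub, ← hq, ← hp]; ring⟩
  have h4 := Int.eq_zero_of_abs_lt_dvd h3 (by rw [abs_lt]; constructor <;> omega)
  omega

/-- prefix sums -/
def preS (a : ℕ → ℕ) (n : ℕ) : ℤ := ∑ j ∈ Finset.Icc 1 n, (a j : ℤ)

lemma preS_zero (a : ℕ → ℕ) : preS a 0 = 0 := by simp [preS]

lemma preS_succ (a : ℕ → ℕ) (n : ℕ) : preS a (n + 1) = preS a n + a (n + 1) := by
  unfold preS
  rw [Finset.sum_Icc_succ_top (by omega)]

lemma Q1 (a : ℕ → ℕ) (i s v : ℕ) (hs1 : 1 ≤ s) (hs : s ≤ i) (hv : v ≤ s - 1) :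
    ∑ j ∈ Finset.Icc 1 v, (a (angMod ((i : ℤ) + (s : ℤ) - (j : ℤ)) i) : ℤ)
      = preS a (s - 1) - preS a (s - 1 - v) := by
  induction v with
  | zero => simp
  | succ v ih =>
    rw [Finset.sum_Icc_succ_top (by omega), ih (by omega)]
    rw [angMod_eq _ i (s - 1 - v) (by omega) (by omega) ⟨-1, by push_cast; omega⟩]
    have := preS_succ a (s - 1 - (v + 1))
    rw [show s - 1 - (v + 1) + 1 = s - 1 - v by omega] at this
    linarith

lemma Q2 (a : ℕ → ℕ) (i s w : ℕ) (hs1 : 1 ≤ s) (hs : s ≤ i) (hw : w ≤ i) :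
    ∑ j ∈ Finset.Icc 1 (s - 1 + w), (a (angMod ((i : ℤ) + (s : ℤ) - (j : ℤ)) i) : ℤ)
      = preS a (s - 1) + preS a i - preS a (i - w) := by
  induction w with
  | zero =>
    rw [Nat.add_zero, Q1 a i s (s - 1) hs1 hs le_rfl]
    simp [preS_zero]
  | succ w ih =>
    rw [← Nat.add_assoc, Finset.sum_Icc_succ_top (by omega), ih (by omega)]
    rw [angMod_eq _ i (i - w) (by omega) (by omega) ⟨0, by push_cast; omega⟩]
    have := preS_succ a (i - (w + 1))
    rw [show i - (w + 1) + 1 = i - w by omega] at this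
    linarith

/-- The union of the interference intervals in color space. -/
noncomputable def gapZ (i L : ℕ) (a : ℕ → ℕ) (k : ℕ) : Finset ℤ :=
  (Finset.Icc 1 i).biUnion (fun m => Finset.Ioc ((k : ℤ) - preS a m - m * L + L - 1)
      (k - preS a m - m * L + L - 1 + a m)) ∪
  (Finset.Icc 1 (i - 1)).biUnion (fun m => Finset.Ioc ((k : ℤ) - preS a m - m * L)
      (k - preS a m - m * L + a m))

lemma gapZ_card (i L : ℕ) (a : ℕ → ℕ) (k : ℕ) (hi : 1 ≤ i) :
    ((gapZ i L a k).card : ℤ) ≤ 2 * preS a i - a i := by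
  have h1 : ((gapZ i L a k).card) ≤ ∑ m ∈ Finset.Icc 1 i, a m + ∑ m ∈ Finset.Icc 1 (i - 1), a m := by
    unfold gapZ
    refine (Finset.card_union_le _ _).trans (Nat.add_le_add ?_ ?_)
    · refine Finset.card_biUnion_le.trans (Finset.sum_le_sum fun m _ => ?_)
      simp
    · refine Finset.card_biUnion_le.trans (Finset.sum_le_sum fun m _ => ?_)
      simp
  have h2 : ((gapZ i L a k).card : ℤ) ≤ preS a i + preS a (i - 1) := by
    unfold preS
    exact_mod_cast h1
  have h3 := preS_succ a (i - 1)
  rw [show i - 1 + 1 = i by omega] at h3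
  linarith

lemma key (i L : ℕ) (hi : 1 ≤ i) (a : ℕ → ℕ) (K : ℕ)
    (hK : (K : ℤ) = ((i : ℤ) - 1) * L + preS a i + 1) (k s : ℕ) (hs1 : 1 ≤ s) (hs : s ≤ i)
    (x : ℤ) (hx0 : 0 < x) (hxK : x < K)
    (hx : ∀ v, 1 ≤ v → v ≤ i - 1 →
      ∑ j ∈ Finset.Icc 1 v, (a (angMod ((i : ℤ) + (s : ℤ) - (j : ℤ)) i) : ℤ) + ((v : ℤ) - 1) * L < x →
      x ≤ ∑ j ∈ Finset.Icc 1 v, (a (angMod ((i : ℤ) + (s : ℤ) - (j : ℤ)) i) : ℤ)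
        + ((v : ℤ) - 1) * L + L → False) :
    ∃ z ∈ gapZ i L a k, (K : ℤ) ∣ z - (k + x - preS a (s - 1) - ((s : ℤ) - 1) * L) := by
  set y : ℤ := x - preS a (s - 1) - ((s : ℤ) - 1) * L with hy
  by_cases hy0 : y ≤ 0
  · have hex : ∃ m : ℕ, -preS a m - m * L < y :=
      ⟨s - 1, by push_cast [Nat.cast_sub hs1]; linarith⟩
    classical
    set m := Nat.find hex with hm
    have hm1 : -preS a m - m * L < y := Nat.find_spec hex
    have hms : m ≤ s - 1 := Nat.find_min' hex (by push_cast [Nat.cast_sub hs1]; linarith)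
    have hm0 : 1 ≤ m := by
      by_contra h
      have : m = 0 := by omega
      rw [this] at hm1
      simp [preS_zero] at hm1
      omega
    have hm2 : ¬ (-preS a (m - 1) - ((m - 1 : ℕ) : ℤ) * L < y) := Nat.find_min hex (by omega)
    have hsucc := preS_succ a (m - 1)
    rw [show m - 1 + 1 = m by omega] at hsucc
    push_cast [Nat.cast_sub hm0] at hm2
    refine ⟨k + y, ?_, ⟨0, by rw [hy]; ring⟩⟩
    unfold gapZ
    rw [Finset.mem_union]
    right
    rw [Finset.mem_biUnion]
    refine ⟨m, by simp; omega, ?_⟩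
    rw [Finset.mem_Ioc]
    refine ⟨by linarith, ?_⟩
    by_contra hgap
    have hb := hx (s - m) (by omega) (by omega)
    rw [Q1 a i s (s - m) hs1 hs (by omega), show s - 1 - (s - m) = m - 1 by omega] at hb
    push_cast [Nat.cast_sub (show m ≤ s by omega)] at hb
    exact hb (by nlinarith) (by nlinarith)
  · have hy1 : y - K ≤ -preS a (s - 1) - ((s : ℤ) - 1) * L - 1 := by linarith
    have hiP : -preS a i - i * L + L - 1 < y - K := by
      rw [hK]; nlinarith
    have hex : ∃ m : ℕ, s ≤ m ∧ -preS a m - m * L + L - 1 < y - K := ⟨i, hs, hiP⟩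
    classical
    set m := Nat.find hex with hm
    obtain ⟨hsm, hm1⟩ : s ≤ m ∧ -preS a m - m * L + L - 1 < y - K := Nat.find_spec hex
    have hmi : m ≤ i := Nat.find_min' hex ⟨hs, hiP⟩
    have hsucc := preS_succ a (m - 1)
    rw [show m - 1 + 1 = m by omega] at hsucc
    refine ⟨k + y - K, ?_, ⟨-1, by rw [hy]; ring⟩⟩
    unfold gapZ
    rw [Finset.mem_union]
    left
    rw [Finset.mem_biUnion]
    refine ⟨m, by simp; omega, ?_⟩
    rw [Finset.mem_Ioc]
    refine ⟨by linarith, ?_⟩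
    rcases Nat.eq_or_lt_of_le hsm with h | h
    · rw [← h] at hsucc ⊢
      nlinarith
    · have hm2 : ¬ (s ≤ m - 1 ∧ -preS a (m - 1) - ((m - 1 : ℕ) : ℤ) * L + L - 1 < y - K) :=
        Nat.find_min hex (by omega)
      push_cast [Nat.cast_sub (show 1 ≤ m by omega)] at hm2
      have hm3 : y - K ≤ -preS a (m - 1) - ((m : ℤ) - 1) * L + L - 1 := by
        by_contra hc
        exact hm2 ⟨by omega, by linarith⟩
      by_contra hgap
      have hb := hx (s - 1 + (i - m + 1)) (by omega) (by omega)
      rw [Q2 a i s (i - m + 1) hs1 hs (by omega), show i - (i - m + 1) = m - 1 by omega] at hb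
      push_cast [Nat.cast_sub hmi, Nat.cast_sub hs1] at hb
      exact hb (by nlinarith) (by nlinarith)

/-- under the coloring assigning, for each `c ∈ [K]`, color `c`
to the nodes `(<c + Σ_{m=1}^{v−1} a_m + (v−1)L>_K, v)` for `v ∈ [i]`, the number
of distinct colors on the closed anti-outneighborhood of any node is at most
`min{2(K−(i−1)L)+i−2−a_i, K}`. -/
theorem stmt8 (i L : ℕ) (hi : 1 ≤ i) (hL : 1 ≤ L) (a : ℕ → ℕ)
    (hmax : ∀ j ∈ Finset.Icc 1 i, a j ≤ a i)
    (K : ℕ) (hK : K = (i - 1) * L + (∑ j ∈ Finset.Icc 1 i, a j) + 1)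
    (col : ℕ × ℕ → ℕ)
    (hcol : ∀ c ∈ Finset.Icc 1 K, ∀ v ∈ Finset.Icc 1 i,
      col (angMod ((c : ℤ) + (∑ m ∈ Finset.Icc 1 (v - 1), (a m : ℤ))
          + ((v : ℤ) - 1) * (L : ℤ)) K, v) = c)
    (k t : ℕ) (hk : k ∈ Finset.Icc 1 K) (ht : t ∈ Finset.Icc 1 i) :
    ((col '' closedAnti K i L a k t).ncard : ℝ) ≤
      min (2 * ((K : ℝ) - ((i : ℝ) - 1) * (L : ℝ)) + (i : ℝ) - 2 - (a i : ℝ)) (K : ℝ) := by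
  have hK1 : 1 ≤ K := by omega
  have hKz : (K : ℤ) = ((i : ℤ) - 1) * L + preS a i + 1 := by
    rw [hK]; unfold preS; push_cast [Nat.cast_sub hi]; ring
  rw [Finset.mem_Icc] at hk ht
  have hcol' : ∀ b s : ℕ, 1 ≤ b → b ≤ K → 1 ≤ s → s ≤ i →
      col (b, s) = angMod ((b : ℤ) - preS a (s - 1) - ((s : ℤ) - 1) * L) K := by
    intro b s hb hbK hs hsi
    have hc := angMod_mem ((b : ℤ) - preS a (s - 1) - ((s : ℤ) - 1) * L) K hK1
    have hd := angMod_dvd ((b : ℤ) - preS a (s - 1) - ((s : ℤ) - 1) * L) K hK1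
    have h := hcol _ (Finset.mem_Icc.2 hc) s (Finset.mem_Icc.2 ⟨hs, hsi⟩)
    rw [angMod_eq _ K b hb hbK] at h
    · exact h
    · obtain ⟨q, hq⟩ := hd
      refine ⟨-q, ?_⟩
      rw [mul_neg, ← hq]
      unfold preS
      ring
  rw [le_min_iff]
  constructor
  · have hsub : col '' closedAnti K i L a k t ⊆
        ((insert (col (k, t)) ((gapZ i L a k).image fun z => angMod z K) : Finset ℕ) : Set ℕ) := by
      rintro _ ⟨⟨b, s⟩, ⟨hb, hs, h⟩, rfl⟩
      simp only [Finset.mem_Icc] at hb hs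
      rw [Finset.mem_coe, Finset.mem_insert]
      rcases h with h | ⟨hbk, hn⟩
      · left; rw [h]
      right
      simp only at hbk
      set x : ℤ := ((b : ℤ) - k) % K with hxdef
      have hx1 := Int.emod_nonneg ((b : ℤ) - k) (show (K : ℤ) ≠ 0 by omega)
      have hx2 := Int.emod_lt_of_pos ((b : ℤ) - k) (show (0 : ℤ) < K by omega)
      have hxd : (K : ℤ) ∣ (b : ℤ) - k - x := Int.dvd_self_sub_emod
      have hx0 : x ≠ 0 := by
        intro h0
        rw [h0, sub_zero] at hxd
        have := Int.eq_zero_of_abs_lt_dvd hxd (by rw [abs_lt]; constructor <;> omega)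
        omega
      obtain ⟨z, hz, hzd⟩ := key i L hi a K hKz k s hs.1 hs.2 x (by omega) hx2 (by
        intro v hv1 hv2 hlo hhi
        apply hn
        refine ⟨s, Finset.mem_Icc.2 hs, v, Finset.mem_Icc.2 ⟨hv1, hv2⟩,
          (x - (∑ j ∈ Finset.Icc 1 v, (a (angMod ((i : ℤ) + (s : ℤ) - (j : ℤ)) i) : ℤ)
            + ((v : ℤ) - 1) * L)).toNat, Finset.mem_Icc.2 ⟨by omega, by omega⟩, rfl, ?_⟩
        rw [Int.toNat_of_nonneg (by linarith)]
        symm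
        apply angMod_eq _ _ _ hb.1 hb.2
        convert hxd using 1
        ring)
      rw [Finset.mem_image]
      refine ⟨z, hz, ?_⟩
      rw [hcol' b s hb.1 hb.2 hs.1 hs.2]
      have hc := angMod_mem ((b : ℤ) - preS a (s - 1) - ((s : ℤ) - 1) * L) K hK1
      have hd := angMod_dvd ((b : ℤ) - preS a (s - 1) - ((s : ℤ) - 1) * L) K hK1
      apply angMod_eq _ _ _ hc.1 hc.2
      obtain ⟨q, hq⟩ := hd
      obtain ⟨p, hp⟩ := hxd
      obtain ⟨w, hw⟩ := hzd
      exact ⟨q + p - w, by rw [mul_sub, mul_add, ← hq, ← hp, ← hw]; ring⟩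
    have h1 := Set.ncard_le_ncard hsub (Finset.finite_toSet _)
    rw [Set.ncard_coe_finset] at h1
    have h2 := h1.trans ((Finset.card_insert_le _ _).trans
      (Nat.add_le_add_right Finset.card_image_le 1))
    have h3 := gapZ_card i L a k hi
    have h4 : ((col '' closedAnti K i L a k t).ncard : ℤ) ≤
        2 * ((K : ℤ) - ((i : ℤ) - 1) * L) + i - 2 - a i := by
      zify at h2 hi
      linarith
    exact_mod_cast h4
  · have hsub : col '' closedAnti K i L a k t ⊆ ((Finset.Icc 1 K : Finset ℕ) : Set ℕ) := by
      rintro _ ⟨⟨b, s⟩, ⟨hb, hs, h⟩, rfl⟩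
      simp only [Finset.mem_Icc] at hb hs
      rw [hcol' b s hb.1 hb.2 hs.1 hs.2, Finset.mem_coe, Finset.mem_Icc]
      exact angMod_mem _ _ hK1
    have h1 := Set.ncard_le_ncard hsub (Finset.finite_toSet _)
    rw [Set.ncard_coe_finset, Nat.card_Icc] at h1
    exact_mod_cast (by omega : (col '' closedAnti K i L a k t).ncard ≤ K)
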